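/- Let S be a set of n points in the plane in general position and let p be a point not in S such that S ∪ {p} is in general position. Then, as integers, cr(S ∪ {p}) = cr(S) + f_{S∪{p}}({p}, S) + f_{S∪{p}}(S, {p}) + Σ_{q∈S} Σ_{r ∈ S, r strictly to the left of the directed line from p to q} λ_S(q,r) − n(n−1)(n−2)/2. -/

import Mathlib

open Finset

/-- The plane. -/
abbrev Plane : Type := ℝ × ℝ

/-- The determinant det(q - p, r - p). -/
def det2 (p q r : Plane) : ℝ :=
  (q.1 - p.1) * (r.2 - p.2) - (q.2 - p.2) * (r.1 - p.1)

/-- `r` is strictly to the left of the directed line from `p` to `q`. -/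
def LeftOf (p q r : Plane) : Prop := 0 < det2 p q r

/-- `r` is strictly to the right of the directed line from `p` to `q`. -/
def RightOf (p q r : Plane) : Prop := det2 p q r < 0

/-- A finite point set is in general position if no three of its points are collinear. -/
def GenPos (S : Finset Plane) : Prop :=
  ∀ p ∈ S, ∀ q ∈ S, ∀ r ∈ S, p ≠ q → p ≠ r → q ≠ r →
    ¬ Collinear ℝ ({p, q, r} : Set Plane)

open Classical in
/-- `lam S p q` is the number of points of `S` strictly to the left of the directed
line from `p` to `q`, with `lam S p p = 0`. -/
noncomputable def lam (S : Finset Plane) (p q : Plane) : ℕ :=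
  if p = q then 0 else (S.filter fun r => LeftOf p q r).card

/-- A finite point set is in convex position if no one of its points lies in the
convex hull of the others. -/
def ConvexPos (P : Finset Plane) : Prop :=
  ∀ x ∈ P, x ∉ convexHull ℝ ((P.erase x : Finset Plane) : Set Plane)

open Classical in
/-- The number of 4-element subsets of `S` in convex position. -/
noncomputable def squareCount (S : Finset Plane) : ℕ :=
  ((S.powersetCard 4).filter fun P => ConvexPos P).card

/-- `fS S P Q = ∑_{p ∈ P} ∑_{q ∈ Q} C(lam S p q, 2)`. -/
noncomputable def fS (S P Q : Finset Plane) : ℕ :=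
  ∑ p ∈ P, ∑ q ∈ Q, Nat.choose (lam S p q) 2

lemma det2_rot (a b c : Plane) : det2 b c a = det2 a b c := by unfold det2; ring
lemma det2_swap (a b c : Plane) : det2 a c b = - det2 a b c := by unfold det2; ring
lemma det2_add (p a b c : Plane) :
    det2 a b c = det2 p a b + det2 p b c + det2 p c a := by unfold det2; ring

lemma collinear_of_det2 {a b c : Plane} (hab : a ≠ b) (h : det2 a b c = 0) :
    Collinear ℝ ({a, b, c} : Set Plane) := by
  rw [collinear_iff_of_mem (p₀ := a) (by simp)]
  refine ⟨b - a, ?_⟩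
  intro x hx
  simp only [Set.mem_insert_iff, Set.mem_singleton_iff] at hx
  rcases hx with rfl | rfl | rfl
  · exact ⟨0, by simp⟩
  · exact ⟨1, by simp⟩
  · unfold det2 at h
    by_cases h1 : b.1 - a.1 = 0
    · have h2 : b.2 - a.2 ≠ 0 := by
        intro h2
        exact hab (Prod.ext (by linarith) (by linarith))
      refine ⟨(x.2 - a.2) / (b.2 - a.2), ?_⟩
      have h3 : x.1 - a.1 = 0 := by
        rw [h1] at h
        have : (b.2 - a.2) * (x.1 - a.1) = 0 := by linarith
        exact (mul_eq_zero.mp this).resolve_left h2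
      apply Prod.ext
      · simp [h1]; linarith
      · simp; field_simp; ring
    · refine ⟨(x.1 - a.1) / (b.1 - a.1), ?_⟩
      apply Prod.ext
      · simp; field_simp; ring
      · simp; field_simp; linarith

lemma det2_ne {S : Finset Plane} (h : GenPos S) {a b c : Plane} (ha : a ∈ S) (hb : b ∈ S)
    (hc : c ∈ S) (hab : a ≠ b) (hac : a ≠ c) (hbc : b ≠ c) : det2 a b c ≠ 0 :=
  fun h0 => h a ha b hb c hc hab hac hbc (collinear_of_det2 hab h0)

lemma mem_hull_of_pos {x a b c : Plane} (h1 : 0 < det2 x a b * det2 a b c)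
    (h2 : 0 < det2 x b c * det2 a b c)
    (h3 : 0 < det2 x c a * det2 a b c) : x ∈ convexHull ℝ ({a, b, c} : Set Plane) := by
  have hd : det2 a b c ≠ 0 := by rintro h; simp [h] at h1
  have hs := det2_add x a b c
  have e1 : 0 < det2 x a b / det2 a b c := by
    rw [← mul_div_mul_right _ _ hd]; exact div_pos h1 (mul_self_pos.mpr hd)
  have e2 : 0 < det2 x b c / det2 a b c := by
    rw [← mul_div_mul_right _ _ hd]; exact div_pos h2 (mul_self_pos.mpr hd)
  have e3 : 0 < det2 x c a / det2 a b c := by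
    rw [← mul_div_mul_right _ _ hd]; exact div_pos h3 (mul_self_pos.mpr hd)
  rw [convexHull_insert (by simp), convexHull_pair]
  simp only [convexJoin_singleton_left, Set.mem_iUnion]
  have hβγ : 0 < det2 x c a / det2 a b c + det2 x a b / det2 a b c := by linarith
  have hsum : det2 x b c / det2 a b c + (det2 x c a / det2 a b c + det2 x a b / det2 a b c) = 1 := by
    rw [← add_div, ← add_div, div_eq_one_iff_eq hd]; linarith
  have hx1 : det2 x b c / det2 a b c * a.1 + det2 x c a / det2 a b c * b.1
      + det2 x a b / det2 a b c * c.1 = x.1 := by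
    field_simp; unfold det2; ring
  have hx2 : det2 x b c / det2 a b c * a.2 + det2 x c a / det2 a b c * b.2
      + det2 x a b / det2 a b c * c.2 = x.2 := by
    field_simp; unfold det2; ring
  set α := det2 x b c / det2 a b c
  set β := det2 x c a / det2 a b c
  set γ := det2 x a b / det2 a b c
  refine ⟨(β / (β + γ)) • b + (γ / (β + γ)) • c,
    ⟨β / (β + γ), γ / (β + γ), by positivity, by positivity, by field_simp, rfl⟩,
    ⟨α, β + γ, e2.le, hβγ.le, hsum, ?_⟩⟩
  apply Prod.ext
  · simp; rw [← hx1]; field_simp; ring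
  · simp; rw [← hx2]; field_simp; ring

lemma pos_of_mem_hull {x a b c : Plane} (hx : x ∈ convexHull ℝ ({a, b, c} : Set Plane)) :
    0 ≤ det2 x a b * det2 a b c ∧ 0 ≤ det2 x b c * det2 a b c ∧
      0 ≤ det2 x c a * det2 a b c := by
  rw [convexHull_insert (by simp), convexHull_pair] at hx
  simp only [convexJoin_singleton_left, Set.mem_iUnion] at hx
  obtain ⟨y, ⟨s, t, hs, ht, hst, rfl⟩, ⟨u, v, hu, hv, huv, rfl⟩⟩ := hx
  obtain rfl : s = 1 - t := by linarith
  obtain rfl : u = 1 - v := by linarith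
  have k := mul_self_nonneg (det2 a b c)
  refine ⟨?_, ?_, ?_⟩
  · have := mul_nonneg (mul_nonneg hv ht) k
    refine this.trans_eq ?_
    simp [det2]; ring
  · have := mul_nonneg hu k
    refine this.trans_eq ?_
    simp [det2]; ring
  · have := mul_nonneg (mul_nonneg hv hs) k
    refine this.trans_eq ?_
    simp [det2]; ring

lemma mem_hull_iff {x a b c : Plane} (h0 : det2 a b c ≠ 0) (h1 : det2 x a b ≠ 0)
    (h2 : det2 x b c ≠ 0) (h3 : det2 x c a ≠ 0) :
    x ∈ convexHull ℝ ({a, b, c} : Set Plane) ↔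
    (0 < det2 x a b * det2 a b c ∧ 0 < det2 x b c * det2 a b c ∧
      0 < det2 x c a * det2 a b c) := by
  constructor
  · intro h
    obtain ⟨k1, k2, k3⟩ := pos_of_mem_hull h
    exact ⟨lt_of_le_of_ne k1 (mul_ne_zero h1 h0).symm, lt_of_le_of_ne k2 (mul_ne_zero h2 h0).symm,
      lt_of_le_of_ne k3 (mul_ne_zero h3 h0).symm⟩
  · rintro ⟨k1, k2, k3⟩
    exact mem_hull_of_pos k1 k2 k3

lemma convexPos_iff {p a b c : Plane} (hpa : p ≠ a) (hpb : p ≠ b) (hpc : p ≠ c)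
    (hab : a ≠ b) (hac : a ≠ c) (hbc : b ≠ c)  :
    ConvexPos {p, a, b, c} ↔ 
      (p ∉ convexHull ℝ ({a, b, c} : Set Plane) ∧ a ∉ convexHull ℝ ({p, b, c} : Set Plane) ∧
       b ∉ convexHull ℝ ({p, a, c} : Set Plane) ∧ c ∉ convexHull ℝ ({p, a, b} : Set Plane)) := by
  have e1 : ({p, a, b, c} : Finset Plane).erase p = {a, b, c} := by
    ext x; simp only [mem_erase, mem_insert, mem_singleton]; grind
  have e2 : ({p, a, b, c} : Finset Plane).erase a = {p, b, c} := by
    ext x; simp only [mem_erase, mem_insert, mem_singleton]; grind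
  have e3 : ({p, a, b, c} : Finset Plane).erase b = {p, a, c} := by
    ext x; simp only [mem_erase, mem_insert, mem_singleton]; grind
  have e4 : ({p, a, b, c} : Finset Plane).erase c = {p, a, b} := by
    ext x; simp only [mem_erase, mem_insert, mem_singleton]; grind
  unfold ConvexPos
  simp only [Finset.forall_mem_insert, Finset.mem_singleton, forall_eq, e1, e2, e3, e4]
  simp

open Classical in
/-- Indicator of `LeftOf`. -/
noncomputable def ell (x y z : Plane) : ℤ := if LeftOf x y z then 1 else 0

open Classical in
/-- Indicator of three distinct points. -/
noncomputable def dist3 (a b c : Plane) : ℤ := if a ≠ b ∧ a ≠ c ∧ b ≠ c then 1 else 0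

open Classical in
/-- Indicator of convex position. -/
noncomputable def cvx (P : Finset Plane) : ℤ := if ConvexPos P then 1 else 0

open Classical in
/-- Same side term. -/
noncomputable def termA (p q r s : Plane) : ℤ :=
  if r = s then 0 else ell p q r * ell p q s + ell q p r * ell q p s

/-- Mixed term. -/
noncomputable def termB (p q r s : Plane) : ℤ := ell p q r * ell q r s

lemma ell_eq1 (x y : Plane) : ell x y y = 0 := by simp [ell, LeftOf, det2, mul_comm]
lemma ell_eq2 (x y : Plane) : ell x x y = 0 := by simp [ell, LeftOf, det2]
lemma ell_eq3 (x y : Plane) : ell x y x = 0 := by simp [ell, LeftOf, det2]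

lemma key {p a b c : Plane} (hpa : p ≠ a) (hpb : p ≠ b) (hpc : p ≠ c)
    (hab : a ≠ b) (hac : a ≠ c) (hbc : b ≠ c) (h0 : det2 a b c ≠ 0) (h1 : det2 p a b ≠ 0)
    (h2 : det2 p b c ≠ 0) (h3 : det2 p c a ≠ 0) :
    cvx {p, a, b, c} = termA p a b c + termA p b c a + termA p c a b
      + (termB p a b c + termB p a c b + termB p b a c + termB p b c a
         + termB p c a b + termB p c b a) - 3 := by
  have hs := det2_add p a b c
  have q1 : det2 p b a = - det2 p a b := det2_swap ..
  have q2 : det2 p c b = - det2 p b c := det2_swap ..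
  have q3 : det2 p a c = - det2 p c a := det2_swap ..
  have q4 : det2 a c b = - det2 a b c := det2_swap ..
  have r1 : det2 a b p = det2 p a b := det2_rot ..
  have r1' : det2 b p a = det2 p a b := by rw [det2_rot, r1]
  have r2 : det2 b c p = det2 p b c := det2_rot ..
  have r2' : det2 c p b = det2 p b c := by rw [det2_rot, r2]
  have r3 : det2 c a p = det2 p c a := det2_rot ..
  have r3' : det2 a p c = det2 p c a := by rw [det2_rot, r3]
  have r4 : det2 b a p = - det2 p a b := by rw [det2_rot, q1]
  have r4' : det2 a p b = - det2 p a b := by rw [det2_rot, r4]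
  have r5 : det2 c b p = - det2 p b c := by rw [det2_rot, q2]
  have r5' : det2 b p c = - det2 p b c := by rw [det2_rot, r5]
  have r6 : det2 a c p = - det2 p c a := by rw [det2_rot, q3]
  have r6' : det2 c p a = - det2 p c a := by rw [det2_rot, r6]
  have r7 : det2 b c a = det2 a b c := det2_rot ..
  have r7' : det2 c a b = det2 a b c := by rw [det2_rot, r7]
  have r8 : det2 c b a = - det2 a b c := by rw [det2_rot, q4]
  have r8' : det2 b a c = - det2 a b c := by rw [det2_rot, r8]
  unfold cvx
  rw [convexPos_iff hpa hpb hpc hab hac hbc, mem_hull_iff h0 h1 h2 h3,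
    mem_hull_iff (x := a) (a := p) h2 (by simp_all) (by simp_all) (by simp_all),
    mem_hull_iff (x := b) (a := p) (by simp_all) (by simp_all)
      (by rw [r8']; exact neg_ne_zero.mpr h0) (by simp_all),
    mem_hull_iff (x := c) (a := p) h1 (by simp_all) (by simp_all) (by simp_all)]
  simp only [termA, termB, ell, LeftOf, q1, q2, q3, q4, r1, r1', r2, r2', r3, r3', r4, r4', r5, r5',
    r6, r6', r7, r7', r8, r8', hab, hac.symm, hbc, if_false,
    mul_pos_iff, Left.neg_pos_iff, Left.neg_neg_iff]
  clear q1 q2 q3 q4 r1 r1' r2 r2' r3 r3' r4 r4' r5 r5' r6 r6' r7 r7' r8 r8'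
  rcases lt_or_gt_of_ne h0 with k0 | k0 <;> rcases lt_or_gt_of_ne h1 with k1 | k1 <;>
  rcases lt_or_gt_of_ne h2 with k2 | k2 <;> rcases lt_or_gt_of_ne h3 with k3 | k3 <;>
  first
  | (exfalso; linarith)
  | simp [k0, k1, k2, k3, k0.le, k1.le, k2.le, k3.le, k0.not_gt, k1.not_gt, k2.not_gt, k3.not_gt]

lemma key' {S : Finset Plane} {p : Plane} (hp : p ∉ S) (hgp' : GenPos (insert p S))
    {a b c : Plane} (ha : a ∈ S) (hb : b ∈ S) (hc : c ∈ S) :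
    dist3 a b c * cvx {p, a, b, c} = termA p a b c + termA p b c a + termA p c a b
      + (termB p a b c + termB p a c b + termB p b a c + termB p b c a
         + termB p c a b + termB p c b a) - 3 * dist3 a b c := by
  by_cases h : a ≠ b ∧ a ≠ c ∧ b ≠ c
  · obtain ⟨hab, hac, hbc⟩ := h
    have hpa : p ≠ a := by rintro rfl; exact hp ha
    have hpb : p ≠ b := by rintro rfl; exact hp hb
    have hpc : p ≠ c := by rintro rfl; exact hp hc
    have hp' : p ∈ insert p S := mem_insert_self _ _
    have ha' := mem_insert_of_mem (b := p) ha
    have hb' := mem_insert_of_mem (b := p) hb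
    have hc' := mem_insert_of_mem (b := p) hc
    rw [key hpa hpb hpc hab hac hbc (det2_ne hgp' ha' hb' hc' hab hac hbc)
      (det2_ne hgp' hp' ha' hb' hpa hpb hab) (det2_ne hgp' hp' hb' hc' hpb hpc hbc)
      (det2_ne hgp' hp' hc' ha' hpc hpa hac.symm)]
    simp [dist3, hab, hac, hbc]
  · have : dist3 a b c = 0 := by simp only [dist3, if_neg h]
    rw [this]
    have h' : a = b ∨ a = c ∨ b = c := by tauto
    rcases h' with rfl | rfl | rfl <;> simp [termA, termB, ell_eq1, ell_eq2, ell_eq3]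

lemma sum_dist3 (S : Finset Plane) (g : Finset Plane → ℤ) :
    ∑ a ∈ S, ∑ b ∈ S, ∑ c ∈ S, dist3 a b c * g {a, b, c} =
      6 * ∑ P ∈ S.powersetCard 3, g P := by
  classical
  have h1 : ∑ a ∈ S, ∑ b ∈ S, ∑ c ∈ S, dist3 a b c * g {a, b, c} =
      ∑ t ∈ (S ×ˢ S ×ˢ S).filter (fun t => t.1 ≠ t.2.1 ∧ t.1 ≠ t.2.2 ∧ t.2.1 ≠ t.2.2),
        g {t.1, t.2.1, t.2.2} := by
    rw [Finset.sum_filter, Finset.sum_product]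
    refine sum_congr rfl fun a _ => ?_
    rw [Finset.sum_product]
    refine sum_congr rfl fun b _ => sum_congr rfl fun c _ => ?_
    simp [dist3]
  rw [h1, ← Finset.sum_fiberwise_of_maps_to (t := S.powersetCard 3)
    (g := fun t : Plane × Plane × Plane => ({t.1, t.2.1, t.2.2} : Finset Plane)), mul_sum]
  · refine sum_congr rfl fun P hP => ?_
    rw [Finset.sum_congr rfl (g := fun _ => g P)]
    · rw [sum_const, nsmul_eq_mul]
      congr 1
      rw [mem_powersetCard] at hP
      obtain ⟨hPS, hP3⟩ := hP
      obtain ⟨x, y, z, hxy, hxz, hyz, rfl⟩ := card_eq_three.mp hP3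
      have hx : x ∈ S := hPS (by simp)
      have hy : y ∈ S := hPS (by simp)
      have hz : z ∈ S := hPS (by simp)
      have : ((S ×ˢ S ×ˢ S).filter (fun t => t.1 ≠ t.2.1 ∧ t.1 ≠ t.2.2 ∧ t.2.1 ≠ t.2.2)).filter
          (fun t : Plane × Plane × Plane => ({t.1, t.2.1, t.2.2} : Finset Plane) = {x, y, z}) =
          {(x, y, z), (x, z, y), (y, x, z), (y, z, x), (z, x, y), (z, y, x)} := by
        ext ⟨a, b, c⟩
        simp only [mem_filter, mem_product, mem_insert, mem_singleton, Prod.mk.injEq]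
        constructor
        · rintro ⟨⟨_, h1, h2, h3⟩, he⟩
          have ma : a ∈ ({x, y, z} : Finset Plane) := by rw [← he]; simp
          have mb : b ∈ ({x, y, z} : Finset Plane) := by rw [← he]; simp
          have mc : c ∈ ({x, y, z} : Finset Plane) := by rw [← he]; simp
          simp only [mem_insert, mem_singleton] at ma mb mc
          clear he
          grind
        · rintro (⟨rfl, rfl, rfl⟩ | ⟨rfl, rfl, rfl⟩ | ⟨rfl, rfl, rfl⟩ | ⟨rfl, rfl, rfl⟩ |
            ⟨rfl, rfl, rfl⟩ | ⟨rfl, rfl, rfl⟩) <;>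
          refine ⟨⟨⟨by assumption, by assumption, by assumption⟩, ?_⟩, ?_⟩ <;>
          first
          | rfl
          | (ext w; simp only [mem_insert, mem_singleton]; tauto)
          | (refine ⟨?_, ?_, ?_⟩ <;> first | assumption | (symm; assumption))
      rw [this]
      have : ({(x, y, z), (x, z, y), (y, x, z), (y, z, x), (z, x, y), (z, y, x)} :
        Finset (Plane × Plane × Plane)).card = 6 := by
        repeat rw [card_insert_of_notMem]
        · simp
        all_goals
          simp only [mem_insert, mem_singleton, Prod.mk.injEq]
          grind
      rw [this]; rfl
    · intro t ht
      rw [(mem_filter.mp ht).2]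
  · rintro ⟨a, b, c⟩ ht
    simp only [mem_filter, mem_product] at ht
    rw [mem_powersetCard]
    refine ⟨?_, card_eq_three.mpr ⟨a, b, c, ht.2.1, ht.2.2.1, ht.2.2.2, rfl⟩⟩
    intro w hw
    simp only [mem_insert, mem_singleton] at hw
    rcases hw with rfl | rfl | rfl <;> tauto

lemma squareCount_insert (S : Finset Plane) (p : Plane) (hp : p ∉ S) :
    (squareCount (insert p S) : ℤ) = squareCount S + ∑ P ∈ S.powersetCard 3, cvx (insert p P) := by
  classical
  have h (T : Finset Plane) : (squareCount T : ℤ) = ∑ P ∈ T.powersetCard 4, cvx P := by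
    unfold squareCount cvx
    rw [card_filter]; push_cast
    refine sum_congr rfl fun P _ => ?_
    congr
  rw [h, h, powersetCard_succ_insert hp, sum_union, sum_image]
  · intro P hP Q hQ hPQ
    have hP' : p ∉ P := fun h => hp ((mem_powersetCard.mp hP).1 h)
    have hQ' : p ∉ Q := fun h => hp ((mem_powersetCard.mp hQ).1 h)
    rw [← erase_insert hP', ← erase_insert hQ']
    exact congrArg (fun X => X.erase p) hPQ
  · rw [disjoint_left]
    intro P hP hQ
    obtain ⟨Q, _, rfl⟩ := mem_image.mp hQ
    exact hp ((mem_powersetCard.mp hP).1 (mem_insert_self _ _))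

lemma lam_eq (S : Finset Plane) (x y : Plane) : (lam S x y : ℤ) = ∑ r ∈ S, ell x y r := by
  classical
  unfold lam
  by_cases h : x = y
  · subst h; simp [ell_eq2]
  · rw [if_neg h, card_filter]; push_cast
    refine sum_congr rfl fun r _ => ?_
    unfold ell; congr

lemma two_choose (S : Finset Plane) (x y : Plane) :
    2 * (((lam S x y).choose 2 : ℕ) : ℤ) =
      ∑ r ∈ S, ∑ s ∈ S, if r = s then 0 else ell x y r * ell x y s := by
  classical
  have h1 : 2 * (((lam S x y).choose 2 : ℕ) : ℤ) = (lam S x y : ℤ) * lam S x y - lam S x y := by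
    have : 2 * (lam S x y).choose 2 + lam S x y = lam S x y * lam S x y := by
      have h := Nat.triangle_succ (lam S x y - 1)
      rcases Nat.eq_zero_or_pos (lam S x y) with h0 | h0
      · simp [h0]
      · rw [Nat.choose_two_right, Nat.mul_div_cancel' (Nat.even_mul_pred_self _).two_dvd]
        obtain ⟨k, hk⟩ := Nat.exists_eq_add_of_lt h0
        rw [hk]; simp; ring
    push_cast [← Nat.cast_mul, ← this]; ring
  rw [h1, lam_eq, sum_mul_sum, ← sum_sub_distrib]
  refine sum_congr rfl fun r hr => ?_
  have : ell x y r = ∑ s ∈ S, if r = s then ell x y r * ell x y s else 0 := by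
    rw [sum_ite_eq, if_pos hr]; unfold ell; split_ifs <;> simp
  rw [sub_eq_iff_eq_add]
  nth_rewrite 3 [this]
  rw [← sum_add_distrib]
  refine sum_congr rfl fun s _ => ?_
  split_ifs <;> simp

lemma lam_insert (S : Finset Plane) (p q : Plane) (hp : p ∉ S) :
    lam (insert p S) p q = lam S p q ∧ lam (insert p S) q p = lam S q p := by
  constructor
  · zify; rw [lam_eq, lam_eq, sum_insert hp, ell_eq3, zero_add]
  · zify; rw [lam_eq, lam_eq, sum_insert hp, ell_eq1, zero_add]

lemma sum_perm1 (S : Finset Plane) (H : Plane → Plane → Plane → ℤ) :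
    ∑ a ∈ S, ∑ b ∈ S, ∑ c ∈ S, H a c b = ∑ a ∈ S, ∑ b ∈ S, ∑ c ∈ S, H a b c :=
  sum_congr rfl fun _ _ => sum_comm

lemma sum_perm2 (S : Finset Plane) (H : Plane → Plane → Plane → ℤ) :
    ∑ a ∈ S, ∑ b ∈ S, ∑ c ∈ S, H b a c = ∑ a ∈ S, ∑ b ∈ S, ∑ c ∈ S, H a b c :=
  sum_comm

lemma sum_perm3 (S : Finset Plane) (H : Plane → Plane → Plane → ℤ) :
    ∑ a ∈ S, ∑ b ∈ S, ∑ c ∈ S, H b c a = ∑ a ∈ S, ∑ b ∈ S, ∑ c ∈ S, H a b c := by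
  rw [sum_perm2 S (fun a b c => H a c b), sum_perm1]

lemma sum_perm4 (S : Finset Plane) (H : Plane → Plane → Plane → ℤ) :
    ∑ a ∈ S, ∑ b ∈ S, ∑ c ∈ S, H c a b = ∑ a ∈ S, ∑ b ∈ S, ∑ c ∈ S, H a b c := by
  rw [sum_perm1 S (fun a b c => H b a c), sum_perm2]

lemma sum_perm5 (S : Finset Plane) (H : Plane → Plane → Plane → ℤ) :
    ∑ a ∈ S, ∑ b ∈ S, ∑ c ∈ S, H c b a = ∑ a ∈ S, ∑ b ∈ S, ∑ c ∈ S, H a b c := by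
  rw [sum_perm2 S (fun a b c => H c a b), sum_perm4]

lemma six_choose (n : ℕ) : (6 : ℤ) * (n.choose 3 : ℕ) = n * ((n : ℤ) - 1) * ((n : ℤ) - 2) := by
  have h := Nat.descFactorial_eq_factorial_mul_choose n 3
  rcases n with _ | _ | n
  · simp
  · simp [Nat.choose]
  · simp [Nat.descFactorial, Nat.factorial] at h
    zify at h
    push_cast
    linarith

open Classical in
theorem stmt16 (n : ℕ) (S : Finset Plane) (hcard : S.card = n) (hgp : GenPos S)
    (p : Plane) (hp : p ∉ S) (hgp' : GenPos (insert p S)) :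
    (squareCount (insert p S) : ℤ) =
      (squareCount S : ℤ) + (fS (insert p S) {p} S : ℤ) + (fS (insert p S) S {p} : ℤ) +
        (∑ q ∈ S, ∑ r ∈ S.filter (fun r => LeftOf p q r), (lam S q r : ℤ)) -
        (n : ℤ) * ((n : ℤ) - 1) * ((n : ℤ) - 2) / 2 := by
  have hA : 2 * ((fS (insert p S) {p} S : ℤ) + (fS (insert p S) S {p} : ℤ)) =
      ∑ a ∈ S, ∑ b ∈ S, ∑ c ∈ S, termA p a b c := by
    unfold fS
    simp only [sum_singleton]
    push_cast
    rw [← sum_add_distrib, mul_sum]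
    refine sum_congr rfl fun q _ => ?_
    rw [(lam_insert S p q hp).1, (lam_insert S p q hp).2, mul_add, two_choose, two_choose,
      ← sum_add_distrib]
    refine sum_congr rfl fun r _ => ?_
    rw [← sum_add_distrib]
    refine sum_congr rfl fun s _ => ?_
    unfold termA
    split_ifs <;> simp
  have hB : (∑ q ∈ S, ∑ r ∈ S.filter (fun r => LeftOf p q r), (lam S q r : ℤ)) =
      ∑ a ∈ S, ∑ b ∈ S, ∑ c ∈ S, termB p a b c := by
    refine sum_congr rfl fun q _ => ?_
    rw [sum_filter]
    refine sum_congr rfl fun r _ => ?_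
    unfold termB
    rw [← mul_sum, ← lam_eq]
    unfold ell
    split_ifs <;> simp
  have hD : ∑ a ∈ S, ∑ b ∈ S, ∑ c ∈ S, dist3 a b c = n * ((n : ℤ) - 1) * ((n : ℤ) - 2) := by
    have := sum_dist3 S (fun _ => 1)
    simp only [mul_one, sum_const, card_powersetCard, hcard, nsmul_eq_mul] at this
    rw [this, six_choose]
  have hC := sum_dist3 S (fun P => cvx (insert p P))
  have hK : ∑ a ∈ S, ∑ b ∈ S, ∑ c ∈ S, dist3 a b c * cvx {p, a, b, c} =
      ∑ a ∈ S, ∑ b ∈ S, ∑ c ∈ S, (termA p a b c + termA p b c a + termA p c a b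
      + (termB p a b c + termB p a c b + termB p b a c + termB p b c a
         + termB p c a b + termB p c b a) - 3 * dist3 a b c) :=
    sum_congr rfl fun a ha => sum_congr rfl fun b hb => sum_congr rfl fun c hc =>
      key' hp hgp' ha hb hc
  simp only [sum_add_distrib, sum_sub_distrib, ← mul_sum] at hK
  rw [sum_perm3 S (termA p), sum_perm4 S (termA p), sum_perm1 S (termB p), sum_perm2 S (termB p),
    sum_perm3 S (termB p), sum_perm4 S (termB p), sum_perm5 S (termB p), ← hA, ← hB, hD] at hK
  rw [squareCount_insert S p hp]
  have h6 := six_choose n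
  have hdiv : (n : ℤ) * ((n : ℤ) - 1) * ((n : ℤ) - 2) / 2 = 3 * (n.choose 3 : ℕ) := by
    rw [← h6]; omega
  rw [hdiv]
  rw [← h6] at hK
  have hC' := hC.symm.trans hK
  linarith
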